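/- Let f : ℝ^N → (−∞,∞] be proper and closed with inf f > −∞. For each k ∈ ℕ let h_k : ℝ^N → ℝ be convex and differentiable, let m_k : ℝ^N → (−∞,∞] be proper, closed and convex with |f(x) − m_k(x)| ≤ ω(‖x − x^k‖) for all x ∈ ℝ^N, where ω is a continuous growth function, and suppose x̂^k is a global minimizer of m_k + D_{h_k}(·, x^k). Suppose: (i) (x^k) and (ŷ^k) are bounded sequences in ℝ^N; (ii) m_k(ŷ^k) + D_{h_k}(ŷ^k, x^k) ≤ m_k(x̂^k) + D_{h_k}(x̂^k, x^k) + ε_k with ε_k → 0; (iii) Δ_k := m_k(ŷ^k) + D_{h_k}(ŷ^k, x^k) − f(x^k) → 0; (iv) for all bounded sequences (u^k), (v^k) in ℝ^N, u^k − v^k → 0 if and only if D_{h_k}(u^k, v^k) → 0; and (v) for every subsequence (x^k)_{k∈K} and point x* with x^k → x* and f(x^k) → f(x*) along K, the slopes satisfy |∇f|(x^k) → 0 along K. Then every limit point x* of the sequence (x^k) is a stationary point of f, i.e. its limiting slope satisfies |∇f|⁻(x*) = 0; moreover f(x^k) → f(x*) along any subsequence converging to x*. -/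

import Mathlib

open scoped RealInnerProductSpace
open Filter Topology

/-- The Bregman distance `D_h(x, u) = h x − h u − ⟨∇h u, x − u⟩` associated with `h`. -/
noncomputable def breg {N : ℕ} (h : EuclideanSpace ℝ (Fin N) → ℝ)
    (x u : EuclideanSpace ℝ (Fin N)) : ℝ :=
  h x - h u - ⟪gradient h u, x - u⟫

/-- Convexity for extended-real-valued functions. -/
def ERealConvex {N : ℕ} (f : EuclideanSpace ℝ (Fin N) → EReal) : Prop :=
  ∀ x y : EuclideanSpace ℝ (Fin N), ∀ a b : ℝ, 0 ≤ a → 0 ≤ b → a + b = 1 →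
    f (a • x + b • y) ≤ (a : EReal) * f x + (b : EReal) * f y

/-- The slope `|∇f|(x̄) = limsup_{x → x̄, x ≠ x̄} [f(x̄) − f(x)]₊ / ‖x − x̄‖`. -/
noncomputable def slopeAt {N : ℕ} (f : EuclideanSpace ℝ (Fin N) → EReal)
    (xb : EuclideanSpace ℝ (Fin N)) : EReal :=
  Filter.limsup (fun x => (((max (f xb - f x) 0).toReal / ‖x - xb‖ : ℝ) : EReal)) (𝓝[≠] xb)

/-- The limiting slope `|∇f|⁻(x̄)`: the liminf of the slope over `x → x̄` with `f x → f x̄`. -/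
noncomputable def limitingSlopeAt {N : ℕ} (f : EuclideanSpace ℝ (Fin N) → EReal)
    (xb : EuclideanSpace ℝ (Fin N)) : EReal :=
  Filter.liminf (fun x => slopeAt f x) ((𝓝 xb) ⊓ Filter.comap f (𝓝 (f xb)))

/-- **Asymptotic stationarity with a growth function.** Every limit point of the iterates is a
stationary point of `f`, and the convergence is `f`-attentive. -/
theorem limit_points_stationary (N : ℕ)
    (f : EuclideanSpace ℝ (Fin N) → EReal)
    (hfbot : ∀ z, f z ≠ ⊥) (hfproper : ∃ z, f z ≠ ⊤)
    (hfclosed : LowerSemicontinuous f) (hfinf : ⊥ < ⨅ z, f z)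
    (x yh xh : ℕ → EuclideanSpace ℝ (Fin N))
    (h : ℕ → EuclideanSpace ℝ (Fin N) → ℝ)
    (hhconv : ∀ k, ConvexOn ℝ Set.univ (h k)) (hhdiff : ∀ k, Differentiable ℝ (h k))
    (m : ℕ → EuclideanSpace ℝ (Fin N) → EReal)
    (hmbot : ∀ k z, m k z ≠ ⊥) (hmproper : ∀ k, ∃ z, m k z ≠ ⊤)
    (hmclosed : ∀ k, LowerSemicontinuous (m k)) (hmconv : ∀ k, ERealConvex (m k))
    (ω : ℝ → ℝ) (hω0 : ω 0 = 0) (hωnn : ∀ t, 0 ≤ t → 0 ≤ ω t)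
    (hωcont : ContinuousOn ω (Set.Ici 0))
    (hωgrowth : Tendsto (fun t => ω t / t) (𝓝[>] (0:ℝ)) (𝓝 0))
    (hmodel : ∀ k z, f z - m k z ≤ ((ω ‖z - x k‖ : ℝ) : EReal) ∧
                     m k z - f z ≤ ((ω ‖z - x k‖ : ℝ) : EReal))
    (hmin : ∀ k u, m k (xh k) + ((breg (h k) (xh k) (x k) : ℝ) : EReal) ≤
                   m k u + ((breg (h k) u (x k) : ℝ) : EReal))
    -- (i) boundedness
    (hxbdd : ∃ C, ∀ k, ‖x k‖ ≤ C) (hybdd : ∃ C, ∀ k, ‖yh k‖ ≤ C)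
    -- (ii) inexactness vanishes
    (ε : ℕ → ℝ) (hε : Tendsto ε atTop (𝓝 0))
    (hinexact : ∀ k, m k (yh k) + ((breg (h k) (yh k) (x k) : ℝ) : EReal) ≤
      m k (xh k) + ((breg (h k) (xh k) (x k) : ℝ) : EReal) + ((ε k : ℝ) : EReal))
    -- (iii) model improvement vanishes
    (Δ : ℕ → ℝ)
    (hΔdef : ∀ k, ((Δ k : ℝ) : EReal) =
      m k (yh k) + ((breg (h k) (yh k) (x k) : ℝ) : EReal) - f (x k))
    (hΔ : Tendsto Δ atTop (𝓝 0))
    -- (iv) Bregman continuity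
    (hbregcont : ∀ u v : ℕ → EuclideanSpace ℝ (Fin N),
      (∃ C, ∀ k, ‖u k‖ ≤ C) → (∃ C, ∀ k, ‖v k‖ ≤ C) →
      (Tendsto (fun k => u k - v k) atTop (𝓝 0) ↔
        Tendsto (fun k => breg (h k) (u k) (v k)) atTop (𝓝 0)))
    -- (v) slopes vanish along f-attentively convergent subsequences
    (hslope : ∀ (φ : ℕ → ℕ), StrictMono φ → ∀ xstar : EuclideanSpace ℝ (Fin N),
      Tendsto (fun k => x (φ k)) atTop (𝓝 xstar) →
      Tendsto (fun k => f (x (φ k))) atTop (𝓝 (f xstar)) →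
      Tendsto (fun k => slopeAt f (x (φ k))) atTop (𝓝 (0 : EReal))) :
    ∀ xstar : EuclideanSpace ℝ (Fin N),
      (∃ φ : ℕ → ℕ, StrictMono φ ∧ Tendsto (fun k => x (φ k)) atTop (𝓝 xstar)) →
      limitingSlopeAt f xstar = 0 ∧
        ∀ φ : ℕ → ℕ, StrictMono φ → Tendsto (fun k => x (φ k)) atTop (𝓝 xstar) →
          Tendsto (fun k => f (x (φ k))) atTop (𝓝 (f xstar)) := by
  have hFfin : ∀ k, f (x k) ≠ ⊤ := by
    intro k hk
    have h1 := hΔdef k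
    rw [hk, EReal.sub_top] at h1
    exact EReal.coe_ne_bot _ h1
  have key : ∀ k z (a : ℝ), f z = (a : EReal) → f (x k) ≤
      ((a + ω ‖z - x k‖ + breg (h k) z (x k) + ε k - Δ k : ℝ) : EReal) := by
    intro k z a hz
    have hm := (hmodel k z).2
    rw [hz] at hm
    have h1 := (hinexact k).trans (add_le_add_left (hmin k z) _)
    have h2 := hΔdef k
    have hf1 := hFfin k
    have hf0 := hfbot (x k)
    have hm0 := hmbot k (yh k)
    have hm1 := hmbot k z
    generalize f (x k) = F at *
    generalize m k (yh k) = M at *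
    generalize m k z = Z at *
    generalize breg (h k) z (x k) = d at *
    generalize breg (h k) (yh k) (x k) = e at *
    generalize ω ‖z - x k‖ = w at *
    lift F to ℝ using ⟨hf1, hf0⟩
    have hZ : Z ≠ ⊤ := by
      rintro rfl
      rw [EReal.top_sub_coe] at hm
      exact EReal.coe_ne_top _ (top_le_iff.1 hm)
    lift Z to ℝ using ⟨hZ, hm1⟩
    have hM : M ≠ ⊤ := by
      rintro rfl
      rw [EReal.top_add_coe] at h1
      have h3 := top_le_iff.1 h1
      norm_cast at h3
    lift M to ℝ using ⟨hM, hm0⟩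
    norm_cast at *
    linarith
  have conv : ∀ (xstar : EuclideanSpace ℝ (Fin N)) (φ : ℕ → ℕ), StrictMono φ →
      Tendsto (fun k => x (φ k)) atTop (𝓝 xstar) →
      Tendsto (fun k => f (x (φ k))) atTop (𝓝 (f xstar)) := by
    intro xs φ hφ hx
    refine tendsto_order.2 ⟨fun b hb => hx.eventually (hfclosed xs b hb), fun b hb => ?_⟩
    have hfin : f xs ≠ ⊤ := ne_top_of_lt hb
    obtain ⟨a, ha⟩ : ∃ a : ℝ, f xs = (a : EReal) :=
      ⟨(f xs).toReal, (EReal.coe_toReal hfin (hfbot xs)).symm⟩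
    have hD : Tendsto (fun k => breg (h (φ k)) xs (x (φ k))) atTop (𝓝 0) := by
      classical
      obtain ⟨C, hC⟩ := hxbdd
      let u : ℕ → EuclideanSpace ℝ (Fin N) := fun k => if k ∈ Set.range φ then xs else x k
      have hu : ∀ j, u (φ j) = xs := fun j => if_pos ⟨j, rfl⟩
      have h1 := (hbregcont u x ⟨max C ‖xs‖, fun k => by
        by_cases hk : k ∈ Set.range φ
        · simp only [u, if_pos hk]; exact le_max_right _ _
        · simp only [u, if_neg hk]; exact (hC k).trans (le_max_left _ _)⟩ ⟨C, hC⟩).1 (by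
        rw [Metric.tendsto_atTop]
        intro r hr
        obtain ⟨K, hK⟩ := Metric.tendsto_atTop.1 hx r hr
        refine ⟨φ K, fun k hk => ?_⟩
        by_cases hkr : k ∈ Set.range φ
        · obtain ⟨j, rfl⟩ := hkr
          have := hK j (hφ.le_iff_le.1 hk)
          rwa [hu, dist_zero_right, ← dist_eq_norm, dist_comm]
        · simp only [u, if_neg hkr, sub_self, dist_self]; exact hr)
      have h2 := h1.comp hφ.tendsto_atTop
      simpa only [Function.comp_def, hu] using h2
    have hw : Tendsto (fun k => ω ‖xs - x (φ k)‖) atTop (𝓝 0) := by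
      have h0 : Tendsto ω (𝓝[Set.Ici 0] 0) (𝓝 0) := by
        have := hωcont 0 (Set.mem_Ici.2 le_rfl)
        rwa [ContinuousWithinAt, hω0] at this
      refine h0.comp (tendsto_nhdsWithin_iff.2 ⟨?_, Eventually.of_forall fun k => norm_nonneg _⟩)
      simpa using (hx.const_sub xs).norm
    have hub : Tendsto (fun k => ((a + ω ‖xs - x (φ k)‖ + breg (h (φ k)) xs (x (φ k))
        + ε (φ k) - Δ (φ k) : ℝ) : EReal)) atTop (𝓝 (f xs)) := by
      rw [ha]
      refine (continuous_coe_real_ereal.tendsto a).comp ?_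
      simpa using (((hw.const_add a).add hD).add (hε.comp hφ.tendsto_atTop)).sub
        (hΔ.comp hφ.tendsto_atTop)
    filter_upwards [hub.eventually (gt_mem_nhds hb)] with k hk
    exact (key (φ k) xs a ha).trans_lt hk
  rintro xs ⟨φ, hφ, hx⟩
  refine ⟨?_, conv xs⟩
  have hf := conv xs φ hφ hx
  have hs := hslope φ hφ xs hx hf
  have hT : Tendsto (fun k => x (φ k)) atTop ((𝓝 xs) ⊓ Filter.comap f (𝓝 (f xs))) :=
    tendsto_inf.2 ⟨hx, tendsto_comap_iff.2 hf⟩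
  rcases subsingleton_or_nontrivial (EuclideanSpace ℝ (Fin N)) with hsub | hnt
  · exfalso
    have hbot : ∀ z, slopeAt f z = ⊥ := by
      intro z
      have : 𝓝[≠] z = ⊥ := by
        have : ({z}ᶜ : Set (EuclideanSpace ℝ (Fin N))) = ∅ := by
          ext y; simp [Subsingleton.elim y z]
        rw [this, nhdsWithin_empty]
      rw [slopeAt, this, limsup_bot]
    simp only [hbot] at hs
    exact EReal.bot_ne_zero (tendsto_nhds_unique tendsto_const_nhds hs)
  · apply le_antisymm
    · rw [limitingSlopeAt, ← hs.liminf_eq]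
      exact liminf_le_liminf_of_le hT
    · refine le_liminf_of_le (by isBoundedDefault) (Eventually.of_forall fun z => ?_)
      have : (𝓝[≠] z).NeBot := Module.punctured_nhds_neBot ℝ _ z
      refine le_limsup_of_frequently_le (Eventually.of_forall fun y => ?_).frequently
        (by isBoundedDefault)
      have : 0 ≤ (max (f z - f y) 0).toReal / ‖y - z‖ :=
        div_nonneg (EReal.toReal_nonneg (le_max_right _ _)) (norm_nonneg _)
      exact_mod_cast this
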